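/- arXiv:2605.01281 — 3 statements merged into one kernel-verified Lean document; each statement's English description precedes it below -/
import Mathlib

section
/- There exists a constant C′ > 0 such that for all integers n ≥ k ≥ 3, there exists a set S of n distinct points in ℝ² such that every subset T ⊆ S with |T| = k contains pairwise distinct points A, B, C with C′·log(k)/log(n) ≤ ∠ABC ≤ 180° − C′·log(k)/log(n) (in degrees). Equivalently, Δ_k(n) ≥ C′·log(k)/log(n), where Δ_k(n) = 90° − Γ_k(n). -/
open EuclideanGeometry Real

/-- `j` is the largest index at which the sets `A` and `B` differ. -/
def IsTopDiff (A B : Finset ℕ) (j : ℕ) : Prop :=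
  ¬(j ∈ A ↔ j ∈ B) ∧ ∀ i, j < i → (i ∈ A ↔ i ∈ B)

theorem IsTopDiff.symm {A B : Finset ℕ} {j : ℕ} (h : IsTopDiff A B j) : IsTopDiff B A j :=
  ⟨fun h' => h.1 h'.symm, fun i hi => (h.2 i hi).symm⟩

theorem exists_isTopDiff {A B : Finset ℕ} (h : A ≠ B) : ∃ j, IsTopDiff A B j := by
  have hne : (symmDiff A B).Nonempty := by
    rw [Finset.nonempty_iff_ne_empty]
    intro h'
    exact h (symmDiff_eq_bot.mp h')
  refine ⟨(symmDiff A B).max' hne, ?_, ?_⟩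
  · have := (symmDiff A B).max'_mem hne
    rw [Finset.mem_symmDiff] at this
    tauto
  · intro i hi
    by_contra hcon
    have hmem : i ∈ symmDiff A B := by
      rw [Finset.mem_symmDiff]
      tauto
    exact absurd ((symmDiff A B).le_max' i hmem) (not_le.mpr hi)

/-- A family of more than `2 ^ m` finite sets contains a triple whose two top differences are
at least `m` levels apart. -/
theorem exists_isTopDiff_add_le {T : Finset (Finset ℕ)} {m : ℕ} (hm : 1 ≤ m)
    (hT : 2 ^ m < T.card) :
    ∃ A ∈ T, ∃ B ∈ T, ∃ D ∈ T, ∃ a b, IsTopDiff A B a ∧ IsTopDiff D B b ∧ b + m ≤ a := by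
  classical
  set J := (T.sup id).filter (fun j => (∃ A ∈ T, j ∈ A) ∧ ∃ B ∈ T, j ∉ B) with hJ
  have mem_J : ∀ {j}, j ∈ J ↔ (∃ A ∈ T, j ∈ A) ∧ ∃ B ∈ T, j ∉ B := by
    intro j
    simp only [hJ, Finset.mem_filter, Finset.mem_sup, id]
    tauto
  have hJne : J.Nonempty := by
    have h1 : 1 < T.card := lt_of_le_of_lt Nat.one_le_two_pow hT
    obtain ⟨A, hA, B, hB, hAB⟩ := Finset.one_lt_card.mp h1
    obtain ⟨j, hj, -⟩ := exists_isTopDiff hAB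
    refine ⟨j, mem_J.mpr ?_⟩
    by_cases hjA : j ∈ A
    · exact ⟨⟨A, hA, hjA⟩, B, hB, by tauto⟩
    · exact ⟨⟨B, hB, by tauto⟩, A, hA, hjA⟩
  set a := J.max' hJne
  have ha := mem_J.mp (J.max'_mem hJne)
  have hagree : ∀ A ∈ T, ∀ B ∈ T, ∀ i, a < i → (i ∈ A ↔ i ∈ B) := by
    intro A hA B hB i hi
    by_contra hcon
    have : i ∈ J := by
      rw [mem_J]
      by_cases hiA : i ∈ A
      · exact ⟨⟨A, hA, hiA⟩, B, hB, by tauto⟩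
      · exact ⟨⟨B, hB, by tauto⟩, A, hA, hiA⟩
    exact absurd (J.le_max' i this) (not_le.mpr hi)
  have key : ∀ H ⊆ T, (∀ A ∈ H, ∀ B ∈ H, (a ∈ A ↔ a ∈ B)) → 2 ^ (m - 1) < H.card →
      ∃ B ∈ H, ∃ D ∈ H, ∃ b, IsTopDiff D B b ∧ b + m ≤ a := by
    intro H hHT hHa hH
    have hcard : (Finset.Ico (a + 1 - m) a).powerset.card < H.card := by
      rw [Finset.card_powerset, Nat.card_Ico]
      exact lt_of_le_of_lt (Nat.pow_le_pow_right two_pos (by omega)) hH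
    obtain ⟨B, hB, D, hD, hBD, heq⟩ := Finset.exists_ne_map_eq_of_card_lt_of_maps_to hcard
      (f := fun A => A ∩ Finset.Ico (a + 1 - m) a)
      (fun A _ => Finset.mem_powerset.mpr Finset.inter_subset_right)
    obtain ⟨b, hb⟩ := exists_isTopDiff hBD.symm
    refine ⟨B, hB, D, hD, b, hb, ?_⟩
    by_contra hcon
    apply hb.1
    rcases lt_trichotomy b a with hlt | rfl | hgt
    · have := congrArg (fun s => b ∈ s) heq
      have hmem : a + 1 - m ≤ b := by omega
      simp only [Finset.mem_inter, Finset.mem_Ico, hmem, hlt, and_true, eq_iff_iff] at this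
      exact this.symm
    · exact hHa D hD B hB
    · exact hagree D (hHT hD) B (hHT hB) b hgt
  obtain ⟨⟨A₁, hA₁, ha₁⟩, A₀, hA₀, ha₀⟩ := ha
  have hsum := T.card_filter_add_card_filter_not (fun A => a ∈ A)
  have hpow : 2 ^ m = 2 ^ (m - 1) + 2 ^ (m - 1) := by
    obtain ⟨l, rfl⟩ := Nat.exists_eq_add_of_le' hm
    rw [Nat.add_sub_cancel]
    ring
  rcases lt_or_ge (2 ^ (m - 1)) (T.filter (fun A => a ∈ A)).card with h | h
  · obtain ⟨B, hB, D, hD, b, hb, hba⟩ := key _ (Finset.filter_subset _ _)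
      (fun A hA B hB => by simp only [Finset.mem_filter] at hA hB; tauto) h
    rw [Finset.mem_filter] at hB hD
    exact ⟨A₀, hA₀, B, hB.1, D, hD.1, a, b, ⟨by tauto, hagree A₀ hA₀ B hB.1⟩, hb, hba⟩
  · obtain ⟨B, hB, D, hD, b, hb, hba⟩ := key (T.filter (fun A => a ∉ A))
      (Finset.filter_subset _ _)
      (fun A hA B hB => by simp only [Finset.mem_filter] at hA hB; tauto) (by omega)
    rw [Finset.mem_filter] at hB hD
    exact ⟨A₁, hA₁, B, hB.1, D, hD.1, a, b, ⟨by tauto, hagree A₁ hA₁ B hB.1⟩, hb, hba⟩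

/-- If `j` is the top difference and lies in `A`, the difference of two sums is the `j`-th term
up to the sum of all lower terms. -/
theorem abs_sum_sub_sum_sub_le {A B : Finset ℕ} {j : ℕ} (h : IsTopDiff A B j) (hj : j ∈ A)
    (f : ℕ → ℝ) (hf : ∀ i < j, 0 ≤ f i) :
    |∑ i ∈ A, f i - ∑ i ∈ B, f i - f j| ≤ ∑ i ∈ Finset.range j, f i := by
  classical
  have hjB : j ∉ B := fun hB => h.1 ⟨fun _ => hB, fun _ => hj⟩
  have hlt : ∀ i, ¬(i ∈ A ↔ i ∈ B) → i ≠ j → i < j := by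
    intro i hi hij
    by_contra hcon
    exact hi (h.2 i (by omega))
  have hjm : j ∈ A \ B := Finset.mem_sdiff.mpr ⟨hj, hjB⟩
  have hA := Finset.sum_sdiff_sub_sum_sdiff (s₁ := A) (s₂ := B) (f := f)
  have hE := Finset.add_sum_erase (A \ B) f hjm
  have h1 : (A \ B).erase j ⊆ Finset.range j := by
    intro i hi
    simp only [Finset.mem_erase, Finset.mem_sdiff] at hi
    exact Finset.mem_range.mpr (hlt i (by tauto) hi.1)
  have h2 : B \ A ⊆ Finset.range j := by
    intro i hi
    simp only [Finset.mem_sdiff] at hi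
    refine Finset.mem_range.mpr (hlt i (by tauto) ?_)
    rintro rfl
    exact hjB hi.1
  have hf' : ∀ i ∈ Finset.range j, 0 ≤ f i := fun i hi => hf i (Finset.mem_range.mp hi)
  have b1 := Finset.sum_le_sum_of_subset_of_nonneg h1 (fun i hi _ => hf' i hi)
  have b2 := Finset.sum_le_sum_of_subset_of_nonneg h2 (fun i hi _ => hf' i hi)
  have p1 := Finset.sum_nonneg (fun i hi => hf' i (h1 hi))
  have p2 := Finset.sum_nonneg (fun i hi => hf' i (h2 hi))
  rw [abs_le]
  constructor <;> linarith

theorem sum_range_eight_pow_le (j : ℕ) :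
    ∑ i ∈ Finset.range j, (8 : ℝ) ^ i ≤ 8 ^ j / 7 := by
  induction j with
  | zero => simp
  | succ j ih =>
    rw [Finset.sum_range_succ, pow_succ]
    linarith

theorem sum_range_sub_mul_eight_pow_le (j : ℕ) :
    ∑ i ∈ Finset.range j, ((j : ℝ) - i) * 8 ^ i ≤ 8 / 49 * 8 ^ j := by
  induction j with
  | zero => norm_num
  | succ j ih =>
    have hsplit : ∑ i ∈ Finset.range j, (((j + 1 : ℕ) : ℝ) - i) * 8 ^ i
        = ∑ i ∈ Finset.range j, ((j : ℝ) - i) * 8 ^ i + ∑ i ∈ Finset.range j, (8 : ℝ) ^ i := by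
      rw [← Finset.sum_add_distrib]
      refine Finset.sum_congr rfl fun i _ => ?_
      push_cast
      ring
    have := sum_range_eight_pow_le j
    rw [Finset.sum_range_succ, hsplit, pow_succ]
    push_cast
    linarith

/-- The abscissa of the point attached to a finite set of exponents. -/
noncomputable def szekeresX (A : Finset ℕ) : ℝ := ∑ i ∈ A, 8 ^ i

/-- The unnormalized ordinate of the point attached to a finite set of exponents. -/
noncomputable def szekeresY (A : Finset ℕ) : ℝ := ∑ i ∈ A, i * 8 ^ i

theorem IsTopDiff.slope_of_mem {A B : Finset ℕ} {j : ℕ} (h : IsTopDiff A B j) (hj : j ∈ A) :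
    0 < szekeresX A - szekeresX B ∧
      |szekeresY A - szekeresY B - j * (szekeresX A - szekeresX B)| ≤
        (szekeresX A - szekeresX B) / 4 := by
  have h1 := abs_sum_sub_sum_sub_le h hj (fun i => (8 : ℝ) ^ i) (fun i _ => by positivity)
  have h2 := abs_sum_sub_sum_sub_le h hj (fun i => ((j : ℝ) - i) * 8 ^ i) (fun i hi => by
    have : (i : ℝ) < j := by exact_mod_cast hi
    have : 0 ≤ (j : ℝ) - i := by linarith
    positivity)
  have b1 := sum_range_eight_pow_le j
  have b2 := sum_range_sub_mul_eight_pow_le j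
  have hp : (0 : ℝ) < 8 ^ j := by positivity
  have hY : ∀ S : Finset ℕ, ∑ i ∈ S, ((j : ℝ) - i) * 8 ^ i
      = j * szekeresX S - szekeresY S := by
    intro S
    simp only [szekeresX, szekeresY, sub_mul, Finset.sum_sub_distrib, Finset.mul_sum]
  rw [hY, hY, sub_self, zero_mul, sub_zero] at h2
  change |szekeresX A - szekeresX B - 8 ^ j| ≤ _ at h1
  rw [abs_le] at h1 h2
  refine ⟨by linarith, ?_⟩
  rw [abs_le]
  constructor <;> linarith

theorem IsTopDiff.slope {A B : Finset ℕ} {j : ℕ} (h : IsTopDiff A B j) :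
    szekeresX A - szekeresX B ≠ 0 ∧
      |szekeresY A - szekeresY B - j * (szekeresX A - szekeresX B)| ≤
        |szekeresX A - szekeresX B| / 4 := by
  by_cases hj : j ∈ A
  · obtain ⟨h1, h2⟩ := h.slope_of_mem hj
    exact ⟨h1.ne', by rwa [abs_of_pos h1]⟩
  · have hjB : j ∈ B := by
      by_contra hB
      exact h.1 ⟨fun h' => absurd h' hj, fun h' => absurd h' hB⟩
    obtain ⟨h1, h2⟩ := h.symm.slope_of_mem hjB
    refine ⟨by linarith, ?_⟩
    rw [abs_sub_comm (szekeresX A), abs_of_pos h1]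
    rw [abs_le] at h2 ⊢
    constructor <;> linarith

/-- The point attached to a set of exponents: a combination of vectors of slopes `i / t`. -/
noncomputable def szekeresPoint (t : ℕ) (A : Finset ℕ) : EuclideanSpace ℝ (Fin 2) :=
  !₂[szekeresX A, szekeresY A / t]

theorem szekeresPoint_injective (t : ℕ) : Function.Injective (szekeresPoint t) := by
  intro A B h
  by_contra hAB
  obtain ⟨j, hj⟩ := exists_isTopDiff hAB
  have h0 : szekeresX A = szekeresX B := by
    simpa [szekeresPoint] using congrArg (fun p : EuclideanSpace ℝ (Fin 2) => p 0) h
  exact hj.slope.1 (sub_eq_zero.mpr h0)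

/-- Lower bound for the sine of the angle between two plane vectors through their cross
product. -/
theorem le_sin_angle_of_cross {u v : EuclideanSpace ℝ (Fin 2)} {c : ℝ} (hc : 0 ≤ c)
    (hu0 : u 0 ≠ 0) (hv0 : v 0 ≠ 0) (hu : |u 1| ≤ |u 0|) (hv : |v 1| ≤ |v 0|)
    (h : 2 * c * (|u 0| * |v 0|) ≤ |u 0 * v 1 - v 0 * u 1|) :
    c ≤ Real.sin (InnerProductGeometry.angle u v) := by
  have hsin := InnerProductGeometry.sin_angle_mul_norm_mul_norm u v
  have hcross : inner ℝ u u * inner ℝ v v - inner ℝ u v * inner ℝ u v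
      = (u 0 * v 1 - v 0 * u 1) ^ 2 := by
    simp only [PiLp.inner_apply, Fin.sum_univ_two, RCLike.inner_apply, conj_trivial]
    ring
  rw [hcross, Real.sqrt_sq_eq_abs] at hsin
  have hnorm : ∀ w : EuclideanSpace ℝ (Fin 2), |w 1| ≤ |w 0| → ‖w‖ ≤ √2 * |w 0| := by
    intro w hw
    rw [EuclideanSpace.norm_eq, Fin.sum_univ_two, ← Real.sqrt_sq (abs_nonneg (w 0)),
      ← Real.sqrt_mul (by norm_num)]
    apply Real.sqrt_le_sqrt
    simp only [Real.norm_eq_abs]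
    nlinarith [abs_nonneg (w 1), abs_nonneg (w 0)]
  have hprod : ‖u‖ * ‖v‖ ≤ 2 * (|u 0| * |v 0|) := by
    calc ‖u‖ * ‖v‖ ≤ (√2 * |u 0|) * (√2 * |v 0|) :=
          mul_le_mul (hnorm u hu) (hnorm v hv) (norm_nonneg _) (by positivity)
      _ = (√2 * √2) * (|u 0| * |v 0|) := by ring
      _ = 2 * (|u 0| * |v 0|) := by rw [Real.mul_self_sqrt (by norm_num)]
  have hupos : 0 < ‖u‖ := norm_pos_iff.mpr fun h' => hu0 (by simp [h'])
  have hvpos : 0 < ‖v‖ := norm_pos_iff.mpr fun h' => hv0 (by simp [h'])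
  refine le_of_mul_le_mul_right ?_ (mul_pos hupos hvpos)
  rw [hsin]
  nlinarith [mul_le_mul_of_nonneg_left hprod hc]

theorem le_angle_of_le_sin {c θ : ℝ} (h0 : 0 ≤ θ) (hπ : θ ≤ π) (h : c ≤ Real.sin θ) :
    c ≤ θ ∧ θ ≤ π - c := by
  have h1 := Real.sin_le h0
  have h2 := Real.sin_le (sub_nonneg.mpr hπ)
  rw [Real.sin_pi_sub] at h2
  constructor <;> linarith

theorem le_sin_angle_szekeresPoint {t a b : ℕ} {A B D : Finset ℕ} (hAB : IsTopDiff A B a)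
    (hDB : IsTopDiff D B b) (hba : b < a) (hat : a < t) :
    ((a : ℝ) - b) / (4 * t) ≤
      Real.sin (∠ (szekeresPoint t A) (szekeresPoint t B) (szekeresPoint t D)) := by
  obtain ⟨hx, hy⟩ := hAB.slope
  obtain ⟨hx', hy'⟩ := hDB.slope
  have hba' : (b : ℝ) + 1 ≤ a := by exact_mod_cast hba
  have hat' : (a : ℝ) + 1 ≤ t := by exact_mod_cast hat
  have hb0 : (0 : ℝ) ≤ b := Nat.cast_nonneg b
  have ht : (0 : ℝ) < t := by linarith
  set x := szekeresX A - szekeresX B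
  set y := szekeresY A - szekeresY B
  set x' := szekeresX D - szekeresX B
  set y' := szekeresY D - szekeresY B
  have hle : ∀ {x y j : ℝ}, 0 ≤ j → j + 1 ≤ t → |y - j * x| ≤ |x| / 4 → |y / t| ≤ |x| := by
    intro x y j hj hjt hxy
    rw [abs_div, abs_of_pos ht, div_le_iff₀ ht]
    have h1 : |y| ≤ |y - j * x| + |j * x| := by
      simpa using abs_add_le (y - j * x) (j * x)
    rw [abs_mul, abs_of_nonneg hj] at h1
    nlinarith [abs_nonneg x]
  have hu : szekeresPoint t A -ᵥ szekeresPoint t B = !₂[x, y / t] := by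
    ext i
    fin_cases i <;> simp [szekeresPoint, x, y, sub_div]
  have hv : szekeresPoint t D -ᵥ szekeresPoint t B = !₂[x', y' / t] := by
    ext i
    fin_cases i <;> simp [szekeresPoint, x', y', sub_div]
  rw [EuclideanGeometry.angle, hu, hv]
  refine le_sin_angle_of_cross (div_nonneg (by linarith) (by positivity)) hx hx'
    (hle (by linarith) hat' hy) (hle hb0 (by linarith) hy') ?_
  change 2 * (((a : ℝ) - b) / (4 * t)) * (|x| * |x'|) ≤ |x * (y' / t) - x' * (y / t)|
  have hcross : x * (y' / t) - x' * (y / t) = (x * y' - x' * y) / t := by ring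
  rw [hcross, abs_div, abs_of_pos ht, le_div_iff₀ ht]
  have hl : 2 * (((a : ℝ) - b) / (4 * t)) * (|x| * |x'|) * t
      = ((a : ℝ) - b) / 2 * (|x| * |x'|) := by
    field_simp
    ring
  rw [hl]
  have e1 : |x * (y' - b * x')| ≤ |x| * |x'| / 4 := by
    rw [abs_mul]
    nlinarith [mul_le_mul_of_nonneg_left hy' (abs_nonneg x)]
  have e2 : |x' * (y - a * x)| ≤ |x| * |x'| / 4 := by
    rw [abs_mul]
    nlinarith [mul_le_mul_of_nonneg_left hy (abs_nonneg x')]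
  have e3 : |((a : ℝ) - b) * (x * x')| = ((a : ℝ) - b) * (|x| * |x'|) := by
    rw [abs_mul, abs_mul, abs_of_nonneg (by linarith : 0 ≤ (a : ℝ) - b)]
  have e4 : |((a : ℝ) - b) * (x * x')| ≤
      |x * (y' - b * x')| + |x' * (y - a * x)| + |x * y' - x' * y| := by
    have : ((a : ℝ) - b) * (x * x')
        = x * (y' - b * x') - x' * (y - a * x) - (x * y' - x' * y) := by ring
    rw [this]
    exact (abs_sub _ _).trans (by gcongr; exact abs_sub _ _)
  have hxx : 0 ≤ |x| * |x'| := by positivity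
  nlinarith

/-- The ratio of logarithms is controlled by the ratio of the integer parameters. -/
theorem log_div_log_le {n k : ℕ} (hk : 3 ≤ k) (hkn : k ≤ n) :
    1 / 16 * Real.log k / Real.log n ≤ (Nat.log 2 (k - 1) : ℝ) / (4 * Nat.clog 2 n) := by
  set m := Nat.log 2 (k - 1)
  set t := Nat.clog 2 n
  have hm : 1 ≤ m := Nat.log_pos (by norm_num) (by omega)
  have ht : 2 ≤ t := by
    by_contra hcon
    have h1 : n ≤ 2 ^ t := Nat.le_pow_clog (by norm_num) n
    have h2 : 2 ^ t ≤ 2 ^ 1 := Nat.pow_le_pow_right two_pos (by omega)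
    omega
  have hk2 : k ≤ 2 ^ (m + 1) := by
    have := Nat.lt_pow_succ_log_self (b := 2) (by norm_num) (k - 1)
    change k - 1 < 2 ^ (m + 1) at this
    omega
  have hn2 : 2 ^ (t - 1) < n := Nat.pow_pred_clog_lt_self (by norm_num) (by omega)
  have hl2 : 0 < Real.log 2 := Real.log_pos (by norm_num)
  have hk3 : Real.log k ≤ (m + 1) * Real.log 2 := by
    have : (k : ℝ) ≤ 2 ^ (m + 1) := by exact_mod_cast hk2
    have := Real.log_le_log (by positivity) this
    rw [Real.log_pow] at this
    exact_mod_cast this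
  have hn3 : ((t : ℝ) - 1) * Real.log 2 ≤ Real.log n := by
    have : (2 : ℝ) ^ (t - 1) ≤ n := by exact_mod_cast hn2.le
    have := Real.log_le_log (by positivity) this
    rw [Real.log_pow, Nat.cast_sub (by omega)] at this
    exact_mod_cast this
  have hm' : (1 : ℝ) ≤ m := by exact_mod_cast hm
  have ht' : (2 : ℝ) ≤ t := by exact_mod_cast ht
  have hn4 : (t : ℝ) / 2 * Real.log 2 ≤ Real.log n := by nlinarith
  have hk4 : Real.log k ≤ 2 * m * Real.log 2 := by nlinarith
  have hn5 : 0 < Real.log n := lt_of_lt_of_le (by positivity) hn4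
  rw [div_le_div_iff₀ hn5 (by positivity)]
  calc 1 / 16 * Real.log k * (4 * t) ≤ 1 / 16 * (2 * m * Real.log 2) * (4 * t) := by gcongr
    _ = m * (t / 2 * Real.log 2) := by ring
    _ ≤ m * Real.log n := by gcongr

/-- **Proposition 3.2 (Δ_k(n) ≥ C′·log k / log n).** There is a constant C′ > 0 such that for
all n ≥ k ≥ 3 there exist n distinct points in the plane with the property that every
k-subset contains three pairwise distinct points whose angle is at least C′·log(k)/log(n)
away from both 0° and 180°. -/
theorem delta_lower_bound :
    ∃ C' : ℝ, 0 < C' ∧ ∀ n k : ℕ, 3 ≤ k → k ≤ n →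
      ∃ S : Finset (EuclideanSpace ℝ (Fin 2)), S.card = n ∧
        ∀ T ⊆ S, T.card = k →
          ∃ A ∈ T, ∃ B ∈ T, ∃ D ∈ T, A ≠ B ∧ B ≠ D ∧ A ≠ D ∧
            C' * Real.log k / Real.log n ≤ ∠ A B D ∧
            ∠ A B D ≤ π - C' * Real.log k / Real.log n := by
  classical
  refine ⟨1 / 16, by norm_num, fun n k hk hkn => ?_⟩
  set t := Nat.clog 2 n with ht
  have hcard : n ≤ (Finset.range t).powerset.card := by
    rw [Finset.card_powerset, Finset.card_range]
    exact Nat.le_pow_clog (by norm_num) n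
  obtain ⟨F, hF, hFn⟩ := Finset.exists_subset_card_eq hcard
  refine ⟨F.image (szekeresPoint t), ?_, fun T hT hTk => ?_⟩
  · rw [Finset.card_image_of_injective _ (szekeresPoint_injective t), hFn]
  obtain ⟨G, hG, rfl⟩ := Finset.subset_image_iff.mp hT
  rw [Finset.card_image_of_injective _ (szekeresPoint_injective t)] at hTk
  have hm : 1 ≤ Nat.log 2 (k - 1) := Nat.log_pos (by norm_num) (by omega)
  have hmk : 2 ^ Nat.log 2 (k - 1) < G.card := by
    have := Nat.pow_log_le_self 2 (x := k - 1) (by omega)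
    omega
  obtain ⟨A, hA, B, hB, D, hD, a, b, hAB, hDB, hba⟩ := exists_isTopDiff_add_le hm hmk
  have hsub : ∀ E ∈ G, ∀ i ∈ E, i < t := fun E hE i hi =>
    Finset.mem_range.mp (Finset.mem_powerset.mp (hF (hG hE)) hi)
  have hat : a < t := by
    by_cases haA : a ∈ A
    · exact hsub A hA a haA
    · refine hsub B hB a ?_
      by_contra haB
      exact hAB.1 ⟨fun h => absurd h haA, fun h => absurd h haB⟩
  have hsin := le_sin_angle_szekeresPoint hAB hDB (by omega) hat
  have hbound : 1 / 16 * Real.log k / Real.log n ≤ ((a : ℝ) - b) / (4 * t) := by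
    refine (log_div_log_le hk hkn).trans ?_
    have : (b : ℝ) + (Nat.log 2 (k - 1) : ℕ) ≤ a := by exact_mod_cast hba
    rw [← ht]
    gcongr
    linarith
  have hinj := szekeresPoint_injective t
  refine ⟨_, Finset.mem_image_of_mem _ hA, _, Finset.mem_image_of_mem _ hB, _,
    Finset.mem_image_of_mem _ hD, hinj.ne ?_, hinj.ne ?_, hinj.ne ?_,
    le_angle_of_le_sin (EuclideanGeometry.angle_nonneg _ _ _)
      (EuclideanGeometry.angle_le_pi _ _ _) (hbound.trans hsin)⟩
  · rintro rfl
    exact hAB.1 Iff.rfl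
  · rintro rfl
    exact hDB.1 Iff.rfl
  · rintro rfl
    exact hAB.1 (hDB.2 a (by omega))
end

section
/- Let m ≥ 1, k ≥ 2, and n ≥ (k−1)^m + 1 be integers, and let c be any function assigning to each pair (i, j) with 1 ≤ i < j ≤ n a color in {1, …, m}. Then there exist indices i₁ < i₂ < ⋯ < i_k such that c(i₁, i₂) = c(i₂, i₃) = ⋯ = c(i_{k−1}, i_k). -/
/-- There are `l + 1` elements `g 0, …, g l = a`, each related to the next by `r`. -/
def HasChainTo {α : Type*} (r : α → α → Prop) (l : ℕ) (a : α) : Prop :=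
  ∃ g : ℕ → α, g l = a ∧ ∀ t < l, r (g t) (g (t + 1))

theorem HasChainTo.zero {α : Type*} (r : α → α → Prop) (a : α) : HasChainTo r 0 a :=
  ⟨fun _ => a, rfl, by simp⟩

theorem HasChainTo.succ {α : Type*} {r : α → α → Prop} {l : ℕ} {a b : α}
    (h : HasChainTo r l a) (hab : r a b) : HasChainTo r (l + 1) b := by
  obtain ⟨g, rfl, hg⟩ := h
  refine ⟨fun t => if t ≤ l then g t else b, by simp, fun t ht => ?_⟩
  obtain rfl | hlt := (Nat.lt_succ_iff.mp ht).eq_or_lt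
  · simpa using hab
  · simpa [hlt.le, Nat.succ_le_iff.mpr hlt] using hg t hlt

/-- A coloring of the pairs of a finite linearly ordered set with more than `d ^ |ι|` elements
by colors in `ι` has an increasing chain with `d` steps, all of the same color. -/
theorem exists_hasChainTo_of_pow_lt_card {α ι : Type*} [LinearOrder α] [Fintype ι]
    (c : α → α → ι) (s : Finset α) {d : ℕ} (hd : 0 < d) (hs : d ^ Fintype.card ι < s.card) :
    ∃ b, ∃ a ∈ s, HasChainTo (fun x y => x ∈ s ∧ x < y ∧ c x y = b) d a := by
  classical
  let P : ι → α → ℕ → Prop := fun b a l =>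
    HasChainTo (fun x y => x ∈ s ∧ x < y ∧ c x y = b) l a
  let label : α → ι → Fin d := fun a b =>
    ⟨Nat.findGreatest (P b a) (d - 1), by have := Nat.findGreatest_le (P := P b a) (d - 1); omega⟩
  obtain ⟨x, hx, y, hy, hne, hxy⟩ := Finset.exists_ne_map_eq_of_card_lt_of_maps_to
    (s := s) (t := Finset.univ) (f := label) (by simpa using hs) (by simp [Set.MapsTo])
  wlog hlt : x < y generalizing x y
  · exact this y hy x hx hne.symm hxy.symm (hne.lt_or_gt.resolve_left hlt)
  have hlabel : Nat.findGreatest (P (c x y) x) (d - 1) = Nat.findGreatest (P (c x y) y) (d - 1) :=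
    congrArg Fin.val (congrFun hxy (c x y))
  have hchain : P (c x y) x (Nat.findGreatest (P (c x y) x) (d - 1)) :=
    Nat.findGreatest_spec (Nat.zero_le _) (HasChainTo.zero _ x)
  have hext : P (c x y) y (Nat.findGreatest (P (c x y) x) (d - 1) + 1) :=
    HasChainTo.succ hchain ⟨hx, hlt, rfl⟩
  have hgt : d - 1 < Nat.findGreatest (P (c x y) x) (d - 1) + 1 := by
    by_contra! hle
    have := Nat.le_findGreatest hle hext
    omega
  have hle := Nat.findGreatest_le (P := P (c x y) x) (d - 1)
  rw [show Nat.findGreatest (P (c x y) x) (d - 1) + 1 = d by omega] at hext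
  exact ⟨c x y, y, hy, hext⟩

/-- Pigeonhole chain lemma from Proposition 3.1: any m-coloring of the pairs from
{1, …, n} with n ≥ (k−1)^m + 1 admits indices i₁ < ⋯ < i_k whose consecutive pairs all
receive the same color. -/
theorem monochromatic_chain (m k n : ℕ) (hm : 1 ≤ m) (hk : 2 ≤ k)
    (hn : (k - 1) ^ m + 1 ≤ n) (c : ℕ → ℕ → Fin m) :
    ∃ f : Fin k → ℕ, StrictMono f ∧ (∀ t, 1 ≤ f t ∧ f t ≤ n) ∧
      ∃ col : Fin m, ∀ i j : Fin k, (j : ℕ) = (i : ℕ) + 1 → c (f i) (f j) = col := by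
  obtain ⟨col, a, ha, g, hga, hg⟩ := exists_hasChainTo_of_pow_lt_card c (Finset.Icc 1 n)
    (d := k - 1) (by omega) (by simpa using hn)
  refine ⟨fun t => g t, ?_, fun t => ?_, col, fun i j hij => ?_⟩
  · obtain ⟨d, rfl⟩ : ∃ d, k = d + 1 := ⟨k - 1, by omega⟩
    exact Fin.strictMono_iff_lt_succ.mpr fun i => (hg i i.isLt).2.1
  · rw [← Finset.mem_Icc]
    obtain ht | ht : (t : ℕ) < k - 1 ∨ (t : ℕ) = k - 1 := by omega
    · exact (hg t ht).1
    · simpa only [ht, hga] using ha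
  · simpa only [hij] using (hg i (by omega)).2.2
end

section
/- Let 0 ≤ θ < 45°, let u ∈ ℝ² be a unit vector, and let T ⊆ ℝ² be a set of points such that for all distinct P, Q ∈ T, the undirected angle between the vector Q − P and the line spanned by u is at most θ (equivalently, |⟨Q − P, u⟩| ≥ ‖Q − P‖·cos θ). Then for all pairwise distinct A, B, C ∈ T, either ∠ABC ≤ 2θ or ∠ABC ≥ 180° − 2θ. -/
open EuclideanGeometry Real
open scoped RealInnerProductSpace

namespace InnerProductGeometry

variable {V : Type*} [NormedAddCommGroup V] [InnerProductSpace ℝ V]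

theorem angle_le_of_norm_mul_norm_mul_cos_le_inner {θ : ℝ} (hθ0 : 0 ≤ θ) (hθ : θ ≤ π) {x y : V}
    (hx : x ≠ 0) (hy : y ≠ 0) (h : ‖x‖ * ‖y‖ * Real.cos θ ≤ ⟪x, y⟫) : angle x y ≤ θ := by
  have hpos : 0 < ‖x‖ * ‖y‖ := mul_pos (norm_pos_iff.mpr hx) (norm_pos_iff.mpr hy)
  rw [← Real.arccos_cos hθ0 hθ]
  exact Real.arccos_le_arccos ((le_div_iff₀' hpos).mpr h)

/-- A vector whose angle to the line spanned by `y` is at most `θ` makes an angle at most `θ`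
with `y` or with `-y`. -/
theorem angle_le_or_angle_neg_le_of_le_abs_inner {θ : ℝ} (hθ0 : 0 ≤ θ) (hθ : θ ≤ π) {x y : V}
    (hx : x ≠ 0) (hy : y ≠ 0) (h : ‖x‖ * ‖y‖ * Real.cos θ ≤ |⟪x, y⟫|) :
    angle x y ≤ θ ∨ π - angle x y ≤ θ := by
  rcases le_abs.mp h with h | h
  · exact Or.inl (angle_le_of_norm_mul_norm_mul_cos_le_inner hθ0 hθ hx hy h)
  · rw [← angle_neg_right]
    exact Or.inr (angle_le_of_norm_mul_norm_mul_cos_le_inner hθ0 hθ hx (neg_ne_zero.mpr hy)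
      (by rwa [norm_neg, inner_neg_right]))

end InnerProductGeometry

/-- Final step of Proposition 3.1: if every segment determined by T makes an angle at most
θ < 45° with the line spanned by the unit vector u, then every angle determined by three
pairwise distinct points of T is within 2θ of 0° or 180°. -/
theorem angles_near_degenerate (θ : ℝ) (hθ0 : 0 ≤ θ) (hθ : θ < π / 4)
    (u : EuclideanSpace ℝ (Fin 2)) (hu : ‖u‖ = 1)
    (T : Set (EuclideanSpace ℝ (Fin 2)))
    (hT : ∀ P ∈ T, ∀ Q ∈ T, P ≠ Q → |⟪Q - P, u⟫| ≥ ‖Q - P‖ * Real.cos θ) :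
    ∀ A ∈ T, ∀ B ∈ T, ∀ C ∈ T, A ≠ B → B ≠ C → A ≠ C →
      ∠ A B C ≤ 2 * θ ∨ ∠ A B C ≥ π - 2 * θ := by
  intro A hA B hB C hC hAB hBC _
  have hu0 : u ≠ 0 := norm_ne_zero_iff.mp (by simp [hu])
  have near_line : ∀ P ∈ T, B ≠ P → InnerProductGeometry.angle (P - B) u ≤ θ ∨
      π - InnerProductGeometry.angle (P - B) u ≤ θ := fun P hP hBP =>
    InnerProductGeometry.angle_le_or_angle_neg_le_of_le_abs_inner hθ0 (by linarith [Real.pi_pos])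
      (sub_ne_zero.mpr hBP.symm) hu0 (by simpa [hu] using hT B hB P hP hBP)
  change InnerProductGeometry.angle (A - B) (C - B) ≤ 2 * θ ∨
    InnerProductGeometry.angle (A - B) (C - B) ≥ π - 2 * θ
  have triangle := InnerProductGeometry.angle_le_angle_add_angle (A - B) u (C - B)
  have triangle_neg := InnerProductGeometry.angle_le_angle_add_angle (A - B) (-u) (C - B)
  have triangle_left := InnerProductGeometry.angle_le_angle_add_angle (A - B) (C - B) u
  have triangle_right := InnerProductGeometry.angle_le_angle_add_angle (C - B) (A - B) u
  rw [InnerProductGeometry.angle_comm u] at triangle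
  rw [InnerProductGeometry.angle_comm (-u), InnerProductGeometry.angle_neg_right,
    InnerProductGeometry.angle_neg_right] at triangle_neg
  rw [InnerProductGeometry.angle_comm (C - B) (A - B)] at triangle_right
  rcases near_line A hA hAB.symm with hA' | hA' <;> rcases near_line C hC hBC with hC' | hC'
  · left; linarith
  · right; linarith
  · right; linarith
  · left; linarith
end
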